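/- Let H ∈ ℝ^{n×n²} be energy-preserving. The set of matrices H̃ ∈ ℝ^{n×n²} with skew-symmetric blocks H̃_i = −H̃_iᵀ satisfying H(x⊗x) = H̃(x⊗x) for all x ∈ ℝⁿ is a nonempty affine subspace of ℝ^{n×n²} of dimension n(n−1)(n−2)/6 = n³/6 − n²/2 + n/3. -/

import Mathlib

/-!
Write `T i j k = H i j k + H k j i`. Testing the quadratic maps on `e_i + e_k` shows that `H` and
`H̃` define the same quadratic map iff `T = T̃` (`quadMap_eq_iff`), and polarizing the cubic form
`xᵀ H (x ⊗ x)` shows that energy preservation makes the cyclic sum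
`T i j k + T j k i + T k i j` vanish (`EnergyPreserving.cyclic`).

Existence: since `T i j k = T k j i` and the cyclic sums of `T` vanish,
`H̃ i j k = (T i j k - T i k j) / 3` is a skew solution (`skewRep`).

Dimension: two skew solutions differ by a `G` that is antisymmetric in its last two indices and in
its first and third indices, i.e. a totally antisymmetric 3-tensor. Such tensors are the
coefficients of the alternating trilinear forms on `ℝⁿ`, that is, of the linear forms on `⋀³ ℝⁿ`,
a space of dimension `n.choose 3`.
-/


open Matrix

/-- The quadratic map `x ↦ H (x ⊗ x)` for a matrix `H ∈ ℝ^{n×n²}` partitioned into `n`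
blocks `H = [H_1, …, H_n]`: `H i` is the `i`-th block and `H i j k` is the entry
`h_{i,(j,k)}`, so that the `j`-th component of `H (x ⊗ x)` is `∑_{i,k} h_{i,(j,k)} x_i x_k`. -/
def quadMap {n : ℕ} (H : Fin n → Matrix (Fin n) (Fin n) ℝ) (x : Fin n → ℝ) : Fin n → ℝ :=
  fun j => ∑ i, ∑ k, H i j k * (x i * x k)

/-- `H` is energy-preserving if `xᵀ H (x ⊗ x) = 0` for all `x ∈ ℝⁿ`. -/
def EnergyPreserving {n : ℕ} (H : Fin n → Matrix (Fin n) (Fin n) ℝ) : Prop :=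
  ∀ x : Fin n → ℝ, ∑ j, x j * quadMap H x j = 0

/-- The trilinear form on `ℝⁿ` with coefficients `G i j k`. -/
def triForm {n : ℕ} (G : Fin n → Matrix (Fin n) (Fin n) ℝ) (x y z : Fin n → ℝ) : ℝ :=
  ∑ i, ∑ j, ∑ k, G i j k * (x i * y j * z k)

section triForm

variable {n : ℕ} (G : Fin n → Matrix (Fin n) (Fin n) ℝ)

lemma triForm_add_left (x x' y z : Fin n → ℝ) :
    triForm G (x + x') y z = triForm G x y z + triForm G x' y z := by
  simp only [triForm, ← Finset.sum_add_distrib, Pi.add_apply, add_mul, mul_add]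

lemma triForm_add_mid (x y y' z : Fin n → ℝ) :
    triForm G x (y + y') z = triForm G x y z + triForm G x y' z := by
  simp only [triForm, ← Finset.sum_add_distrib, Pi.add_apply, add_mul, mul_add]

lemma triForm_add_right (x y z z' : Fin n → ℝ) :
    triForm G x y (z + z') = triForm G x y z + triForm G x y z' := by
  simp only [triForm, ← Finset.sum_add_distrib, Pi.add_apply, mul_add]

lemma triForm_smul_left (c : ℝ) (x y z : Fin n → ℝ) :
    triForm G (c • x) y z = c * triForm G x y z := by
  simp only [triForm, Finset.mul_sum, Pi.smul_apply, smul_eq_mul]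
  refine Finset.sum_congr rfl fun i _ => Finset.sum_congr rfl fun j _ =>
    Finset.sum_congr rfl fun k _ => by ring

lemma triForm_smul_mid (c : ℝ) (x y z : Fin n → ℝ) :
    triForm G x (c • y) z = c * triForm G x y z := by
  simp only [triForm, Finset.mul_sum, Pi.smul_apply, smul_eq_mul]
  refine Finset.sum_congr rfl fun i _ => Finset.sum_congr rfl fun j _ =>
    Finset.sum_congr rfl fun k _ => by ring

lemma triForm_smul_right (c : ℝ) (x y z : Fin n → ℝ) :
    triForm G x y (c • z) = c * triForm G x y z := by
  simp only [triForm, Finset.mul_sum, Pi.smul_apply, smul_eq_mul]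
  refine Finset.sum_congr rfl fun i _ => Finset.sum_congr rfl fun j _ =>
    Finset.sum_congr rfl fun k _ => by ring

lemma triForm_single (i j k : Fin n) :
    triForm G (Pi.single i 1) (Pi.single j 1) (Pi.single k 1) = G i j k := by
  unfold triForm
  rw [Finset.sum_eq_single i, Finset.sum_eq_single j, Finset.sum_eq_single k]
  · simp
  all_goals simp +contextual [Pi.single_apply]

lemma quadMap_eq_triForm (x : Fin n → ℝ) (j : Fin n) :
    quadMap G x j = triForm G x (Pi.single j 1) x := by
  unfold quadMap triForm
  refine Finset.sum_congr rfl fun i _ => Eq.symm ?_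
  rw [Finset.sum_eq_single j]
  · simp
  · simp +contextual [Pi.single_apply]
  · simp

lemma sum_mul_quadMap (x : Fin n → ℝ) : ∑ j, x j * quadMap G x j = triForm G x x x := by
  simp only [quadMap, triForm, Finset.mul_sum]
  rw [Finset.sum_comm]
  refine Finset.sum_congr rfl fun i _ => Finset.sum_congr rfl fun j _ =>
    Finset.sum_congr rfl fun k _ => by ring

end triForm

lemma quadMap_eq_iff {n : ℕ} (H K : Fin n → Matrix (Fin n) (Fin n) ℝ) :
    (∀ x : Fin n → ℝ, quadMap H x = quadMap K x) ↔
      ∀ i j k, H i j k + H k j i = K i j k + K k j i := by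
  constructor
  · intro h i j k
    have key : ∀ x, triForm H x (Pi.single j 1) x = triForm K x (Pi.single j 1) x := fun x => by
      rw [← quadMap_eq_triForm, ← quadMap_eq_triForm, h]
    have h1 := key (Pi.single i 1)
    have h2 := key (Pi.single k 1)
    have h3 := key (Pi.single i 1 + Pi.single k 1)
    simp only [triForm_add_left, triForm_add_right, triForm_single] at h1 h2 h3
    linarith
  · intro h x
    funext j
    -- Symmetrizing the double sum in its two indices expresses `quadMap` through `T`.
    have sym : ∀ L : Fin n → Matrix (Fin n) (Fin n) ℝ,
        2 * quadMap L x j = ∑ i, ∑ k, (L i j k + L k j i) * (x i * x k) := by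
      intro L
      have hswap : quadMap L x j = ∑ i, ∑ k, L k j i * (x i * x k) := by
        rw [quadMap, Finset.sum_comm]
        refine Finset.sum_congr rfl fun i _ => Finset.sum_congr rfl fun k _ => by ring
      rw [two_mul]
      nth_rewrite 2 [hswap]
      simp only [quadMap, add_mul, Finset.sum_add_distrib]
    have := sym H
    simp only [h, ← sym K] at this
    linarith

/-- Polarization of the vanishing cubic form `xᵀ H (x ⊗ x)`: the sum of the coefficients over all
permutations of the indices is zero. -/
lemma EnergyPreserving.cyclic {n : ℕ} {H : Fin n → Matrix (Fin n) (Fin n) ℝ}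
    (hH : EnergyPreserving H) (i j k : Fin n) :
    (H i j k + H k j i) + (H j k i + H i k j) + (H k i j + H j i k) = 0 := by
  have key : ∀ x, triForm H x x x = 0 := fun x => by rw [← sum_mul_quadMap, hH x]
  let a : Fin n → ℝ := Pi.single i 1
  let b : Fin n → ℝ := Pi.single j 1
  let c : Fin n → ℝ := Pi.single k 1
  have h1 := key a
  have h2 := key b
  have h3 := key c
  have h4 := key (a + b)
  have h5 := key (a + c)
  have h6 := key (b + c)
  have h7 := key (a + b + c)
  simp only [a, b, c, triForm_add_left, triForm_add_mid, triForm_add_right, triForm_single]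
    at h1 h2 h3 h4 h5 h6 h7
  linarith

/-- The skew-block representative `(T i j k - T i k j) / 3` with `T i j k = H i j k + H k j i`. -/
noncomputable def skewRep {n : ℕ} (H : Fin n → Matrix (Fin n) (Fin n) ℝ) :
    Fin n → Matrix (Fin n) (Fin n) ℝ :=
  fun i => Matrix.of fun j k => ((H i j k + H k j i) - (H i k j + H j k i)) / 3

/-- The totally antisymmetric 3-tensors, cut out by antisymmetry under the transpositions of the
last two indices and of the first and third ones. -/
def antisymTensors (n : ℕ) : Submodule ℝ (Fin n → Matrix (Fin n) (Fin n) ℝ) where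
  carrier := {G | (∀ i j k, G i k j = -G i j k) ∧ ∀ i j k, G k j i = -G i j k}
  add_mem' := by
    rintro G K ⟨h1, h2⟩ ⟨h3, h4⟩
    refine ⟨fun i j k => ?_, fun i j k => ?_⟩
    · simp only [Pi.add_apply, Matrix.add_apply, h1 i j k, h3 i j k]; ring
    · simp only [Pi.add_apply, Matrix.add_apply, h2 i j k, h4 i j k]; ring
  zero_mem' := by simp
  smul_mem' := by
    rintro c G ⟨h1, h2⟩
    refine ⟨fun i j k => ?_, fun i j k => ?_⟩
    · simp only [Pi.smul_apply, Matrix.smul_apply, h1 i j k, smul_neg]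
    · simp only [Pi.smul_apply, Matrix.smul_apply, h2 i j k, smul_neg]

section antisym

variable {n : ℕ} {G : Fin n → Matrix (Fin n) (Fin n) ℝ}

lemma triForm_swap_right (hG : G ∈ antisymTensors n) (x y z : Fin n → ℝ) :
    triForm G x z y = -triForm G x y z := by
  simp only [triForm, ← Finset.sum_neg_distrib]
  refine Finset.sum_congr rfl fun i _ => ?_
  rw [Finset.sum_comm]
  refine Finset.sum_congr rfl fun j _ => Finset.sum_congr rfl fun k _ => ?_
  rw [hG.1 i j k]; ring

lemma triForm_swap_outer (hG : G ∈ antisymTensors n) (x y z : Fin n → ℝ) :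
    triForm G z y x = -triForm G x y z := by
  have h : ∀ u v w, triForm G u v w = ∑ j, ∑ i, ∑ k, G i j k * (u i * v j * w k) :=
    fun u v w => Finset.sum_comm
  rw [h, h, ← Finset.sum_neg_distrib]
  refine Finset.sum_congr rfl fun j _ => ?_
  rw [Finset.sum_comm, ← Finset.sum_neg_distrib]
  refine Finset.sum_congr rfl fun i _ => ?_
  rw [← Finset.sum_neg_distrib]
  refine Finset.sum_congr rfl fun k _ => ?_
  rw [hG.2 i j k]; ring

/-- The alternating trilinear form whose coefficients are a given antisymmetric tensor. -/
def altForm (G : Fin n → Matrix (Fin n) (Fin n) ℝ) (hG : G ∈ antisymTensors n) :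
    (Fin n → ℝ) [⋀^Fin 3]→ₗ[ℝ] ℝ where
  toFun v := triForm G (v 0) (v 1) (v 2)
  map_update_add' v i x y := by
    rename_i inst
    obtain rfl := Subsingleton.elim inst (instDecidableEqFin 3)
    fin_cases i <;>
      simp [Function.update, triForm_add_left, triForm_add_mid, triForm_add_right]
  map_update_smul' v i c x := by
    rename_i inst
    obtain rfl := Subsingleton.elim inst (instDecidableEqFin 3)
    fin_cases i <;>
      simp [Function.update, triForm_smul_left, triForm_smul_mid, triForm_smul_right]
  map_eq_zero_of_eq' v i j hv hij := by
    have h1 : ∀ x y, triForm G x y y = 0 := fun x y => by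
      linarith [triForm_swap_right hG x y y]
    have h2 : ∀ x y, triForm G x y x = 0 := fun x y => by
      linarith [triForm_swap_outer hG x y x]
    have h3 : ∀ x y, triForm G x x y = 0 := fun x y => by
      linarith [triForm_swap_right hG x x y, h2 x y]
    fin_cases i <;> fin_cases j <;> simp_all

end antisym

/-- The coefficients `f (e_i, e_j, e_k)` of an alternating trilinear form, which constitute an
antisymmetric 3-tensor. -/
def coeffMap (n : ℕ) : ((Fin n → ℝ) [⋀^Fin 3]→ₗ[ℝ] ℝ) →ₗ[ℝ] antisymTensors n where
  toFun := fun f =>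
    ⟨fun i => Matrix.of fun j k => f ![Pi.single i 1, Pi.single j 1, Pi.single k 1], by
      refine ⟨fun i j k => ?_, fun i j k => ?_⟩
      · have h := f.map_swap ![Pi.single i 1, Pi.single j 1, Pi.single k 1]
          (show (1 : Fin 3) ≠ 2 by decide)
        refine Eq.trans (congrArg f ?_) h
        funext m
        fin_cases m <;> rfl
      · have h := f.map_swap ![Pi.single i 1, Pi.single j 1, Pi.single k 1]
          (show (0 : Fin 3) ≠ 2 by decide)
        refine Eq.trans (congrArg f ?_) h
        funext m
        fin_cases m <;> rfl⟩
  map_add' := fun _ _ => rfl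
  map_smul' := fun _ _ => rfl

/-- Reading off coefficients identifies alternating trilinear forms with antisymmetric
3-tensors. -/
noncomputable def coeffEquiv (n : ℕ) :
    ((Fin n → ℝ) [⋀^Fin 3]→ₗ[ℝ] ℝ) ≃ₗ[ℝ] antisymTensors n :=
  LinearEquiv.ofBijective (coeffMap n)
    (by
      constructor
      · intro f g hfg
        refine Module.Basis.ext_alternating (Pi.basisFun ℝ (Fin n)) fun v _ => ?_
        have h : f ![Pi.single (v 0) 1, Pi.single (v 1) 1, Pi.single (v 2) 1] =
            g ![Pi.single (v 0) 1, Pi.single (v 1) 1, Pi.single (v 2) 1] :=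
          congrFun (congrFun (congrFun (congrArg Subtype.val hfg) (v 0)) (v 1)) (v 2)
        have hv : (fun m => Pi.basisFun ℝ (Fin n) (v m)) =
            ![Pi.single (v 0) 1, Pi.single (v 1) 1, Pi.single (v 2) 1] := by
          funext m
          fin_cases m <;> simp
        rw [hv, h]
      · rintro ⟨G, hG⟩
        refine ⟨altForm G hG, Subtype.ext ?_⟩
        funext i
        ext j k
        exact triForm_single G i j k)

lemma finrank_antisymTensors (n : ℕ) :
    Module.finrank ℝ (antisymTensors n) = n * (n - 1) * (n - 2) / 6 := by
  rw [← (coeffEquiv n).finrank_eq, exteriorPower.alternatingMapLinearEquiv.finrank_eq]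
  change Module.finrank ℝ (Module.Dual ℝ _) = _
  rw [Subspace.dual_finrank_eq, exteriorPower.finrank_eq, Module.finrank_fin_fun,
    Nat.choose_eq_descFactorial_div_factorial]
  simp only [Nat.descFactorial, Nat.factorial]
  congr 1
  simp only [Nat.sub_zero, mul_one]
  ring

/-- The set of skew-block matrices `H̃` equivalent to an energy-preserving `H` is a
nonempty affine subspace of dimension `n(n−1)(n−2)/6 = n³/6 − n²/2 + n/3`. -/
theorem skew_representations_affine_subspace {n : ℕ}
    (H : Fin n → Matrix (Fin n) (Fin n) ℝ) (hH : EnergyPreserving H) :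
    ∃ A : AffineSubspace ℝ (Fin n → Matrix (Fin n) (Fin n) ℝ),
      (A : Set (Fin n → Matrix (Fin n) (Fin n) ℝ)) =
        {Ht | (∀ i, (Ht i)ᵀ = -(Ht i)) ∧ ∀ x : Fin n → ℝ, quadMap H x = quadMap Ht x} ∧
      (A : Set (Fin n → Matrix (Fin n) (Fin n) ℝ)).Nonempty ∧
      Module.finrank ℝ A.direction = n * (n - 1) * (n - 2) / 6 := by
  refine ⟨AffineSubspace.mk' (skewRep H) (antisymTensors n), ?_,
    AffineSubspace.mk'_nonempty _ _, ?_⟩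
  · have s1 : ∀ i j k, skewRep H i k j = -skewRep H i j k := fun i j k => by
      simp only [skewRep, Matrix.of_apply]; ring
    have s2 : ∀ i j k, H i j k + H k j i = skewRep H i j k + skewRep H k j i := fun i j k => by
      simp only [skewRep, Matrix.of_apply]
      linarith [hH.cyclic i j k]
    ext K
    rw [SetLike.mem_coe, AffineSubspace.mem_mk', Set.mem_ofPred_eq, quadMap_eq_iff, vsub_eq_sub]
    constructor
    · rintro ⟨h1, h2⟩
      simp only [Pi.sub_apply, Matrix.sub_apply] at h1 h2
      refine ⟨fun i => ?_, fun i j k => ?_⟩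
      · ext j k
        rw [Matrix.transpose_apply, Matrix.neg_apply]
        linarith [h1 i j k, s1 i j k]
      · linarith [h2 i j k, s2 i j k]
    · rintro ⟨h1, h2⟩
      refine ⟨fun i j k => ?_, fun i j k => ?_⟩
      · have h := congrFun (congrFun (h1 i) j) k
        rw [Matrix.transpose_apply, Matrix.neg_apply] at h
        simp only [Pi.sub_apply, Matrix.sub_apply]
        linarith [s1 i j k]
      · simp only [Pi.sub_apply, Matrix.sub_apply]
        linarith [h2 i j k, s2 i j k]
  · rw [AffineSubspace.direction_mk']
    exact finrank_antisymTensors n
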